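/- Let q ≥ 2. There is a well-defined linear map Θ on V_[A] determined by Θ(A_{σ,σ·τ}) = Σ_{σ̂∈N_τ∩C_σ} A_{σ̂,iσ̂·τ} − Σ_{σ̂∈N_τ∩N_σ} A_{σ̂,iσ̂·τ} for τ ∈ σ_q and σ ∈ C_τ, and its image is orthogonal to V_{adj}: ⟨v^{adj}_ν, Θ(x)⟩ = 0 for every ν ∈ σ_q and every x ∈ V_[A]. -/

import Mathlib

open Matrix MeasureTheory
open scoped Kronecker

noncomputable section

namespace CliffordPaper

/-- The single-qubit Pauli matrices `1, X, Y, Z`. -/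
def pauli1 : Fin 4 → Matrix (Fin 2) (Fin 2) ℂ :=
  ![1, !![0, 1; 1, 0], !![0, -Complex.I; Complex.I, 0], !![1, 0; 0, -1]]

/-- Index type for the computational basis of `q` qubits. -/
abbrev Idx (q : ℕ) := Fin q → Fin 2

/-- The space `M_d` of `d × d` complex matrices, `d = 2^q`. -/
abbrev Mat (q : ℕ) := Matrix (Idx q) (Idx q) ℂ

/-- The space `M_d ⊗ M_d`, realized as matrices indexed by the product index set
(the tensor factors combine via the Kronecker product `⊗ₖ`). -/
abbrev BMat (q : ℕ) := Matrix (Idx q × Idx q) (Idx q × Idx q) ℂ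

/-- The `q`-fold Kronecker product of single-qubit Paulis with labels `a`. -/
def PauliOp {q : ℕ} (a : Fin q → Fin 4) : Mat q :=
  Matrix.of fun x y => ∏ i, pauli1 (a i) (x i) (y i)

/-- `√d` as a complex number, where `d = 2^q`. -/
def sqrtd (q : ℕ) : ℂ := (Real.sqrt (2 ^ q) : ℝ)

/-- The set `σ̂_q` of normalized Pauli operators. -/
def sigmaHat (q : ℕ) : Set (Mat q) :=
  {M | ∃ a : Fin q → Fin 4, M = (sqrtd q)⁻¹ • PauliOp a}

/-- The normalized identity `σ₀ = 1/√d`. -/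
def sigma0 (q : ℕ) : Mat q := (sqrtd q)⁻¹ • (1 : Mat q)

/-- `σ_q = σ̂_q \ {σ₀}`. -/
def sigmaSet (q : ℕ) : Set (Mat q) := sigmaHat q \ {sigma0 q}

/-- `N_τ`: the normalized nonidentity Paulis anticommuting with `τ`. -/
def NSet {q : ℕ} (τ : Mat q) : Set (Mat q) :=
  {σ | σ ∈ sigmaSet q ∧ σ * τ + τ * σ = 0}

/-- `C_τ`: the normalized nonidentity Paulis distinct from `τ` commuting with `τ`. -/
def CSet {q : ℕ} (τ : Mat q) : Set (Mat q) :=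
  {σ | σ ∈ sigmaSet q ∧ σ ≠ τ ∧ σ * τ = τ * σ}

/-- `Ĉ_τ`: the normalized Paulis commuting with `τ`. -/
def CHatSet {q : ℕ} (τ : Mat q) : Set (Mat q) :=
  {σ | σ ∈ sigmaHat q ∧ σ * τ = τ * σ}

/-- The normalized product `σ·τ = √d στ`. -/
def nprod {q : ℕ} (σ τ : Mat q) : Mat q := sqrtd q • (σ * τ)

/-- The Clifford normalizer `𝒩_q`: unitaries mapping normalized Paulis to
signed normalized Paulis under conjugation. -/
def Cliff (q : ℕ) : Set (Mat q) :=
  {U | U ∈ Matrix.unitaryGroup (Idx q) ℂ ∧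
    ∀ σ ∈ sigmaHat q, ∃ τ ∈ sigmaHat q, U * σ * Uᴴ = τ ∨ U * σ * Uᴴ = -τ}

/-- The two-copy representation `φ⊗²(U) : A ⊗ B ↦ (UAU†) ⊗ (UBU†)`, extended linearly. -/
def twoCopy {q : ℕ} (U : Mat q) : BMat q →ₗ[ℂ] BMat q where
  toFun M := (U ⊗ₖ U) * M * (U ⊗ₖ U)ᴴ
  map_add' M N := by
    show (U ⊗ₖ U) * (M + N) * (U ⊗ₖ U)ᴴ = (U ⊗ₖ U) * M * (U ⊗ₖ U)ᴴ + (U ⊗ₖ U) * N * (U ⊗ₖ U)ᴴ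
    rw [Matrix.mul_add, Matrix.add_mul]
  map_smul' c M := by
    show (U ⊗ₖ U) * (c • M) * (U ⊗ₖ U)ᴴ = c • ((U ⊗ₖ U) * M * (U ⊗ₖ U)ᴴ)
    rw [Matrix.mul_smul, Matrix.smul_mul]

/-- The Hilbert–Schmidt inner product `⟨A, B⟩ = tr(A† B)`. -/
def hs {q : ℕ} (A B : BMat q) : ℂ := (Aᴴ * B).trace

/-- A subspace is invariant under the two-copy representation of `𝒩_q`. -/
def IsInvariant (q : ℕ) (W : Submodule ℂ (BMat q)) : Prop :=
  ∀ U ∈ Cliff q, ∀ v ∈ W, twoCopy U v ∈ W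

/-- A nonzero invariant subspace carries an irreducible subrepresentation. -/
def CarriesIrred (q : ℕ) (W : Submodule ℂ (BMat q)) : Prop :=
  W ≠ ⊥ ∧ IsInvariant q W ∧ ∀ W' ≤ W, IsInvariant q W' → W' = ⊥ ∨ W' = W

/-- Two invariant subspaces carry equivalent subrepresentations: there is a linear
isomorphism between them intertwining the two-copy representation. -/
def EquivRep (q : ℕ) (W W' : Submodule ℂ (BMat q)) : Prop :=
  ∃ T : BMat q →ₗ[ℂ] BMat q, Submodule.map T W = W' ∧
    (∀ x ∈ W, T x = 0 → x = 0) ∧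
    ∀ U ∈ Cliff q, ∀ x ∈ W, T (twoCopy U x) = twoCopy U (T x)

/-- `S_{σ,τ} = (σ⊗τ + τ⊗σ)/√2`. -/
def SVec {q : ℕ} (σ τ : Mat q) : BMat q :=
  ((Real.sqrt 2 : ℂ))⁻¹ • (σ ⊗ₖ τ + τ ⊗ₖ σ)

/-- `A_{σ,τ} = (σ⊗τ − τ⊗σ)/√2`. -/
def AVec {q : ℕ} (σ τ : Mat q) : BMat q :=
  ((Real.sqrt 2 : ℂ))⁻¹ • (σ ⊗ₖ τ - τ ⊗ₖ σ)

/-- The trivial sector `V_id`. -/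
def Vid (q : ℕ) : Submodule ℂ (BMat q) :=
  Submodule.span ℂ {sigma0 q ⊗ₖ sigma0 q}

/-- The right adjoint sector `V_r`. -/
def Vr (q : ℕ) : Submodule ℂ (BMat q) :=
  Submodule.span ℂ {M | ∃ τ ∈ sigmaSet q, M = sigma0 q ⊗ₖ τ}

/-- The left adjoint sector `V_l`. -/
def Vl (q : ℕ) : Submodule ℂ (BMat q) :=
  Submodule.span ℂ {M | ∃ τ ∈ sigmaSet q, M = τ ⊗ₖ sigma0 q}

/-- The diagonal sector `V_d`. -/
def Vdiag (q : ℕ) : Submodule ℂ (BMat q) :=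
  Submodule.span ℂ {M | ∃ τ ∈ sigmaSet q, M = τ ⊗ₖ τ}

/-- The symmetric commuting sector `V_[S]`. -/
def VScom (q : ℕ) : Submodule ℂ (BMat q) :=
  Submodule.span ℂ {M | ∃ τ ∈ sigmaSet q, ∃ σ ∈ CSet τ, M = SVec σ τ}

/-- The symmetric anti-commuting sector `V_{S}`. -/
def VSanti (q : ℕ) : Submodule ℂ (BMat q) :=
  Submodule.span ℂ {M | ∃ τ ∈ sigmaSet q, ∃ σ ∈ NSet τ, M = SVec σ τ}

/-- The antisymmetric commuting sector `V_[A]`. -/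
def VAcom (q : ℕ) : Submodule ℂ (BMat q) :=
  Submodule.span ℂ {M | ∃ τ ∈ sigmaSet q, ∃ σ ∈ CSet τ, M = AVec σ τ}

/-- The antisymmetric anti-commuting sector `V_{A}`. -/
def VAanti (q : ℕ) : Submodule ℂ (BMat q) :=
  Submodule.span ℂ {M | ∃ τ ∈ sigmaSet q, ∃ σ ∈ NSet τ, M = AVec σ τ}

/-- `V_[A]` presented with the spanning vectors `A_{σ,σ·τ}`, `σ ∈ C_τ`. -/
def VAcom' (q : ℕ) : Submodule ℂ (BMat q) :=
  Submodule.span ℂ {M | ∃ τ ∈ sigmaSet q, ∃ σ ∈ CSet τ, M = AVec σ (nprod σ τ)}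

/-- `V_0 = span{Σ_{σ∈σ_q} σ⊗σ}`. -/
def V0diag (q : ℕ) : Submodule ℂ (BMat q) :=
  Submodule.span ℂ {∑ᶠ σ ∈ sigmaSet q, σ ⊗ₖ σ}

/-- `V_1`, the "positive" part of the diagonal sector. -/
def V1diag (q : ℕ) : Submodule ℂ (BMat q) :=
  Submodule.span ℂ {v | ∃ lam : Mat q → ℂ,
    v = ∑ᶠ σ ∈ sigmaSet q, lam σ • (σ ⊗ₖ σ) ∧
    (∑ᶠ σ ∈ sigmaSet q, lam σ) = 0 ∧
    ∀ τ ∈ sigmaSet q, (∑ᶠ σ ∈ NSet τ, lam σ) = -((2 ^ q : ℂ) / 2) * lam τ}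

/-- `V_2`, the "negative" part of the diagonal sector. -/
def V2diag (q : ℕ) : Submodule ℂ (BMat q) :=
  Submodule.span ℂ {v | ∃ lam : Mat q → ℂ,
    v = ∑ᶠ σ ∈ sigmaSet q, lam σ • (σ ⊗ₖ σ) ∧
    (∑ᶠ σ ∈ sigmaSet q, lam σ) = 0 ∧
    ∀ τ ∈ sigmaSet q, (∑ᶠ σ ∈ NSet τ, lam σ) = ((2 ^ q : ℂ) / 2) * lam τ}

/-- `v^[adj]_τ = (2|C_τ|)^{-1/2} Σ_{σ∈C_τ} S_{σ,σ·τ}`. -/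
def vadjS {q : ℕ} (τ : Mat q) : BMat q :=
  ((Real.sqrt (2 * ((CSet τ).ncard : ℝ)) : ℂ))⁻¹ • ∑ᶠ σ ∈ CSet τ, SVec σ (nprod σ τ)

/-- `v^{adj}_τ = (2|N_τ|)^{-1/2} Σ_{σ∈N_τ} A_{σ,iσ·τ}`. -/
def vadjA {q : ℕ} (τ : Mat q) : BMat q :=
  ((Real.sqrt (2 * ((NSet τ).ncard : ℝ)) : ℂ))⁻¹ •
    ∑ᶠ σ ∈ NSet τ, AVec σ (Complex.I • nprod σ τ)

/-- The symmetric adjoint sector `V_[adj]`. -/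
def VadjS (q : ℕ) : Submodule ℂ (BMat q) :=
  Submodule.span ℂ {M | ∃ τ ∈ sigmaSet q, M = vadjS τ}

/-- The antisymmetric adjoint sector `V_{adj}`. -/
def VadjA (q : ℕ) : Submodule ℂ (BMat q) :=
  Submodule.span ℂ {M | ∃ τ ∈ sigmaSet q, M = vadjA τ}

/-- The orthogonal complement `V^⊥_{adj}` of `V_{adj}` inside `V_{A}`. -/
def VadjAperp (q : ℕ) : Submodule ℂ (BMat q) :=
  Submodule.span ℂ {v | v ∈ VAanti q ∧ ∀ w ∈ VadjA q, hs w v = 0}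

/-- `V_{1}^τ`. -/
def V1symτ (q : ℕ) (τ : Mat q) : Submodule ℂ (BMat q) :=
  Submodule.span ℂ {v | ∃ lam : Mat q → ℂ,
    v = ∑ᶠ σ ∈ NSet τ, lam σ • SVec σ (Complex.I • nprod σ τ) ∧
    ∀ ν ∈ NSet τ, (∑ᶠ σ ∈ NSet τ ∩ CSet ν, lam σ) - (∑ᶠ σ ∈ NSet τ ∩ NSet ν, lam σ)
      = ((2 ^ q : ℂ) / 2) * lam ν}

/-- `V_{2}^τ`. -/
def V2symτ (q : ℕ) (τ : Mat q) : Submodule ℂ (BMat q) :=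
  Submodule.span ℂ {v | ∃ lam : Mat q → ℂ,
    v = ∑ᶠ σ ∈ NSet τ, lam σ • SVec σ (Complex.I • nprod σ τ) ∧
    ∀ ν ∈ NSet τ, (∑ᶠ σ ∈ NSet τ ∩ CSet ν, lam σ) - (∑ᶠ σ ∈ NSet τ ∩ NSet ν, lam σ)
      = -((2 ^ q : ℂ) / 2) * lam ν}

/-- `V_{1} = ⊕_τ V_{1}^τ`. -/
def V1sym (q : ℕ) : Submodule ℂ (BMat q) := ⨆ τ ∈ sigmaSet q, V1symτ q τ

/-- `V_{2} = ⊕_τ V_{2}^τ`. -/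
def V2sym (q : ℕ) : Submodule ℂ (BMat q) := ⨆ τ ∈ sigmaSet q, V2symτ q τ

/-- The defining property of the map `Θ` on `V_[A]`. -/
def ThetaProp (q : ℕ) (Θ : BMat q →ₗ[ℂ] BMat q) : Prop :=
  ∀ τ ∈ sigmaSet q, ∀ σ ∈ CSet τ,
    Θ (AVec σ (nprod σ τ)) =
      (∑ᶠ σ' ∈ NSet τ ∩ CSet σ, AVec σ' (Complex.I • nprod σ' τ)) -
      ∑ᶠ σ' ∈ NSet τ ∩ NSet σ, AVec σ' (Complex.I • nprod σ' τ)

/-- `V` = span of off-diagonal products `σ⊗σ̂`, `σ ≠ σ̂`. -/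
def Voff (q : ℕ) : Submodule ℂ (BMat q) :=
  Submodule.span ℂ {M | ∃ σ ∈ sigmaSet q, ∃ σ' ∈ sigmaSet q, σ ≠ σ' ∧ M = σ ⊗ₖ σ'}

/-- `V^τ` = span of the `σ⊗σ̂` with `σ·σ̂ ∈ {τ, −τ, iτ, −iτ}`. -/
def Vtau (q : ℕ) (τ : Mat q) : Submodule ℂ (BMat q) :=
  Submodule.span ℂ {M | ∃ σ ∈ sigmaSet q, ∃ σ' ∈ sigmaSet q,
    (nprod σ σ' = τ ∨ nprod σ σ' = -τ ∨ nprod σ σ' = Complex.I • τ ∨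
      nprod σ σ' = -(Complex.I • τ)) ∧ M = σ ⊗ₖ σ'}


/-! ### Pauli combinatorics -/

/-- commutation sign of single-qubit labels -/
def sg1 (k l : Fin 4) : ℤ := if k = 0 ∨ l = 0 ∨ k = l then 1 else -1

/-- commutation sign -/
def chi {q : ℕ} (a b : Fin q → Fin 4) : ℤ := ∏ i, sg1 (a i) (b i)

/-- normalized Pauli with label -/
def sP {q : ℕ} (a : Fin q → Fin 4) : Mat q := (sqrtd q)⁻¹ • PauliOp a

/-- tensor product of 2x2 matrices -/
def tens {q : ℕ} (f : Fin q → Matrix (Fin 2) (Fin 2) ℂ) : Mat q :=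
  Matrix.of fun x y => ∏ i, f i (x i) (y i)

lemma tens_mul {q : ℕ} (f g : Fin q → Matrix (Fin 2) (Fin 2) ℂ) :
    tens f * tens g = tens fun i => f i * g i := by
  ext x y
  simp only [tens, Matrix.mul_apply, Matrix.of_apply]
  rw [Fintype.prod_sum]
  simp [Finset.prod_mul_distrib]

lemma tens_trace {q : ℕ} (f : Fin q → Matrix (Fin 2) (Fin 2) ℂ) :
    (tens f).trace = ∏ i, (f i).trace := by
  simp only [tens, Matrix.trace, Matrix.diag_apply, Matrix.of_apply]
  rw [Fintype.prod_sum]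

lemma tens_one {q : ℕ} : tens (fun _ : Fin q => (1 : Matrix (Fin 2) (Fin 2) ℂ)) = 1 := by
  ext x y
  simp only [tens, Matrix.of_apply, Matrix.one_apply]
  rw [Finset.prod_ite_zero]
  simp [funext_iff]

lemma PauliOp_eq {q : ℕ} (a : Fin q → Fin 4) : PauliOp a = tens fun i => pauli1 (a i) := rfl

lemma pauli1_sq (k : Fin 4) : pauli1 k * pauli1 k = 1 := by
  fin_cases k <;> ext i j <;> fin_cases i <;> fin_cases j <;>
    simp [pauli1, Matrix.mul_apply, Fin.sum_univ_two]

lemma pauli1_comm (k l : Fin 4) : pauli1 k * pauli1 l = (sg1 k l : ℂ) • (pauli1 l * pauli1 k) := by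
  fin_cases k <;> fin_cases l <;> ext i j <;> fin_cases i <;> fin_cases j <;>
    simp [pauli1, sg1, Matrix.mul_apply, Fin.sum_univ_two]

lemma pauli1_trace (k l : Fin 4) :
    (pauli1 k * pauli1 l).trace = if k = l then 2 else 0 := by
  fin_cases k <;> fin_cases l <;>
    simp [pauli1, Matrix.trace, Matrix.mul_apply, Fin.sum_univ_two] <;> norm_num

lemma pauli1_herm (k : Fin 4) (i j : Fin 2) : star (pauli1 k i j) = pauli1 k j i := by
  fin_cases k <;> fin_cases i <;> fin_cases j <;> simp [pauli1]

lemma pauli1_compl (i j k l : Fin 2) :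
    ∑ a, pauli1 a i j * pauli1 a k l = if i = l ∧ j = k then 2 else 0 := by
  fin_cases i <;> fin_cases j <;> fin_cases k <;> fin_cases l <;>
    simp [pauli1, Fin.sum_univ_four] <;> norm_num

lemma sqrtd_ne {q : ℕ} : sqrtd q ≠ 0 := by
  unfold sqrtd
  exact_mod_cast (Real.sqrt_pos.2 (by positivity)).ne'

lemma sqrtd_sq {q : ℕ} : sqrtd q * sqrtd q = 2 ^ q := by
  unfold sqrtd
  rw [← Complex.ofReal_mul, Real.mul_self_sqrt (by positivity)]
  simp

lemma sqrtd_conj {q : ℕ} : star (sqrtd q) = sqrtd q := by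
  unfold sqrtd
  simp [Complex.star_def]

lemma sP_sq {q : ℕ} (a : Fin q → Fin 4) : sP a * sP a = ((2 : ℂ) ^ q)⁻¹ • (1 : Mat q) := by
  unfold sP
  rw [Matrix.smul_mul, Matrix.mul_smul, smul_smul, ← mul_inv, sqrtd_sq, PauliOp_eq, tens_mul]
  simp only [pauli1_sq, tens_one]

lemma sP_comm {q : ℕ} (a b : Fin q → Fin 4) : sP a * sP b = (chi a b : ℂ) • (sP b * sP a) := by
  unfold sP
  simp only [Matrix.smul_mul, Matrix.mul_smul, smul_smul]
  rw [PauliOp_eq, PauliOp_eq, tens_mul, tens_mul]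
  ext x y
  simp only [tens, Matrix.smul_apply, Matrix.of_apply, pauli1_comm (a _) (b _), smul_eq_mul,
    Finset.prod_mul_distrib, chi]
  push_cast
  ring

lemma sP_trace {q : ℕ} (a b : Fin q → Fin 4) :
    (sP a * sP b).trace = if a = b then 1 else 0 := by
  unfold sP
  rw [Matrix.smul_mul, Matrix.mul_smul, smul_smul, ← mul_inv, sqrtd_sq, PauliOp_eq, PauliOp_eq,
    tens_mul, Matrix.trace_smul, tens_trace]
  simp only [pauli1_trace]
  rw [Finset.prod_ite_zero]
  have hiff : (∀ i ∈ Finset.univ, a i = b i) ↔ a = b := by simp [funext_iff]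
  simp only [hiff]
  split_ifs <;> simp

lemma sP_inj {q : ℕ} : Function.Injective (sP (q := q)) := by
  intro a b h
  have h1 := sP_trace a b
  rw [← h, sP_trace] at h1
  by_contra hne
  simp [hne] at h1

lemma sP_herm {q : ℕ} (a : Fin q → Fin 4) : (sP a)ᴴ = sP a := by
  ext x y
  simp only [sP, Matrix.conjTranspose_apply, Matrix.smul_apply, smul_eq_mul, star_mul', star_inv₀,
    sqrtd_conj, PauliOp, Matrix.of_apply, star_prod, pauli1_herm]

lemma sP_compl {q : ℕ} (A : Mat q) : ∑ a, (sP a * A).trace • sP a = A := by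
  ext x y
  have key : ∀ z w : Idx q, ∑ a : Fin q → Fin 4, sP a z w * sP a x y
      = if z = y ∧ w = x then 1 else 0 := by
    intro z w
    have h : ∀ a : Fin q → Fin 4, sP a z w * sP a x y =
      ((2 : ℂ) ^ q)⁻¹ * ∏ i, (pauli1 (a i) (z i) (w i) * pauli1 (a i) (x i) (y i)) := by
      intro a
      simp only [sP, Matrix.smul_apply, smul_eq_mul, PauliOp, Matrix.of_apply,
        Finset.prod_mul_distrib, ← sqrtd_sq, mul_inv]
      ring
    simp only [h]
    rw [← Finset.mul_sum]
    have := Fintype.prod_sum (fun (i : Fin q) (k : Fin 4) =>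
      pauli1 k (z i) (w i) * pauli1 k (x i) (y i))
    rw [← this]
    simp only [pauli1_compl]
    rw [Finset.prod_ite_zero]
    have hiff : (∀ i ∈ Finset.univ, z i = y i ∧ w i = x i) ↔ z = y ∧ w = x := by
      simp [funext_iff, forall_and]
    simp only [hiff]
    split_ifs <;> simp
  simp only [Matrix.sum_apply, Matrix.smul_apply, smul_eq_mul, Matrix.trace, Matrix.diag_apply,
    Matrix.mul_apply, Finset.sum_mul]
  rw [Finset.sum_comm]
  have : ∀ z w : Idx q, ∑ a : Fin q → Fin 4, sP a z w * A w z * sP a x y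
      = (if z = y ∧ w = x then 1 else 0) * A w z := by
    intro z w
    rw [← key, Finset.sum_mul]
    exact Finset.sum_congr rfl fun a _ => by ring
  have h2 : ∀ z : Idx q, ∑ a : Fin q → Fin 4, ∑ w, sP a z w * A w z * sP a x y
      = ∑ w, (if z = y ∧ w = x then 1 else 0) * A w z := by
    intro z
    rw [Finset.sum_comm]
    exact Finset.sum_congr rfl fun w _ => this z w
  simp only [h2]
  rw [Finset.sum_eq_single y, Finset.sum_eq_single x]
  · simp
  · intro b _ hb; simp [hb]
  · simp
  · intro b _ hb; simp [hb]
  · simp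

lemma sP_zero {q : ℕ} : sP (0 : Fin q → Fin 4) = sigma0 q := by
  unfold sP sigma0
  rw [PauliOp_eq, ← tens_one]
  rfl

lemma sg1_zero (k : Fin 4) : sg1 k 0 = 1 := by simp [sg1]

lemma chi_zero {q : ℕ} (a : Fin q → Fin 4) : chi a 0 = 1 := by
  simp [chi, sg1]

lemma zero_chi {q : ℕ} (a : Fin q → Fin 4) : chi 0 a = 1 := by
  simp [chi, sg1]

lemma chi_self {q : ℕ} (a : Fin q → Fin 4) : chi a a = 1 := by
  simp [chi, sg1]

lemma sg1_symm (k l : Fin 4) : sg1 k l = sg1 l k := by revert k l; decide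

lemma chi_symm {q : ℕ} (a b : Fin q → Fin 4) : chi a b = chi b a := by
  simp only [chi, sg1_symm (a _)]

lemma chi_cases {q : ℕ} (a b : Fin q → Fin 4) : chi a b = 1 ∨ chi a b = -1 := by
  have : chi a b ^ 2 = 1 := by
    rw [chi, ← Finset.prod_pow]
    apply Finset.prod_eq_one
    intro i _
    unfold sg1
    split_ifs <;> simp
  simpa using this

lemma chi_orth {q : ℕ} {b c : Fin q → Fin 4} (h : b ≠ c) :
    ∑ a : Fin q → Fin 4, chi a b * chi a c = 0 := by
  simp only [chi, ← Finset.prod_mul_distrib]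
  rw [← Fintype.prod_sum (fun (i : Fin q) (k : Fin 4) => sg1 k (b i) * sg1 k (c i))]
  obtain ⟨i, hi⟩ := Function.ne_iff.mp h
  apply Finset.prod_eq_zero (Finset.mem_univ i)
  revert hi
  generalize b i = k
  generalize c i = l
  revert k l
  decide

lemma sP_mul_ne {q : ℕ} (a b : Fin q → Fin 4) : sP a * sP b ≠ 0 := by
  intro h
  have h2 : sP a * (sP a * sP b) * sP b = 0 := by rw [h]; simp
  have h3 : sP a * (sP a * sP b) * sP b = (sP a * sP a) * (sP b * sP b) := by
    simp only [Matrix.mul_assoc]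
  rw [h3, sP_sq, sP_sq] at h2
  simp at h2

lemma mem_sigmaSet {q : ℕ} (M : Mat q) : M ∈ sigmaSet q ↔ ∃ a, a ≠ 0 ∧ M = sP a := by
  unfold sigmaSet sigmaHat
  constructor
  · rintro ⟨⟨a, ha⟩, h0⟩
    refine ⟨a, ?_, ha⟩
    rintro rfl
    exact h0 (ha.trans sP_zero)
  · rintro ⟨a, ha, rfl⟩
    refine ⟨⟨a, rfl⟩, ?_⟩
    intro h
    exact ha (sP_inj (h.trans sP_zero.symm))

lemma sP_mem_sigmaSet {q : ℕ} (a : Fin q → Fin 4) : sP a ∈ sigmaSet q ↔ a ≠ 0 := by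
  rw [mem_sigmaSet]
  constructor
  · rintro ⟨b, hb, h⟩
    rwa [sP_inj h]
  · intro h
    exact ⟨a, h, rfl⟩

lemma anti_iff {q : ℕ} (a b : Fin q → Fin 4) :
    sP a * sP b + sP b * sP a = 0 ↔ chi a b = -1 := by
  rw [sP_comm a b]
  rcases chi_cases a b with h | h <;> rw [h]
  · simp only [Int.cast_one, one_smul]
    rw [← two_smul ℂ]
    simp [sP_mul_ne]
  · simp

lemma comm_iff {q : ℕ} (a b : Fin q → Fin 4) :
    sP a * sP b = sP b * sP a ↔ chi a b = 1 := by
  rw [sP_comm a b]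
  rcases chi_cases a b with h | h <;> rw [h]
  · simp
  · simp only [Int.cast_neg, Int.cast_one, neg_smul, one_smul]
    rw [neg_eq_iff_add_eq_zero, ← two_smul ℂ]
    simp [sP_mul_ne]

lemma mem_NSet {q : ℕ} (a b : Fin q → Fin 4) : sP a ∈ NSet (sP b) ↔ chi a b = -1 := by
  unfold NSet
  rw [Set.mem_setOf_eq, anti_iff, sP_mem_sigmaSet, and_iff_right_iff_imp]
  rintro h rfl
  rw [zero_chi] at h
  norm_num at h

lemma mem_CSet {q : ℕ} (a b : Fin q → Fin 4) :
    sP a ∈ CSet (sP b) ↔ a ≠ 0 ∧ a ≠ b ∧ chi a b = 1 := by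
  unfold CSet
  rw [Set.mem_setOf_eq, comm_iff, sP_mem_sigmaSet, sP_inj.ne_iff]

open Classical in
lemma finsum_sP {q : ℕ} {V : Type*} [AddCommMonoid V] (S : Set (Mat q))
    (hS : S ⊆ sigmaSet q) (g : Mat q → V) :
    ∑ᶠ x ∈ S, g x = ∑ a : Fin q → Fin 4, if sP a ∈ S then g (sP a) else 0 := by
  have h : S = sP '' {a | sP a ∈ S} := by
    ext x
    constructor
    · intro hx
      obtain ⟨a, _, rfl⟩ := (mem_sigmaSet x).1 (hS hx)
      exact ⟨a, hx, rfl⟩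
    · rintro ⟨a, ha, rfl⟩
      exact ha
  conv_lhs => rw [h]
  rw [finsum_mem_image sP_inj.injOn, finsum_mem_def, finsum_eq_sum_of_fintype]
  apply Finset.sum_congr rfl
  intro a _
  simp [Set.indicator_apply]

lemma NSet_sub {q : ℕ} (τ : Mat q) : NSet τ ⊆ sigmaSet q := fun _ h => h.1

lemma finsum_N {q : ℕ} {V : Type*} [AddCommGroup V] [Module ℂ V] (t : Fin q → Fin 4)
    (g : Mat q → V) :
    ∑ᶠ x ∈ NSet (sP t), g x = ∑ a, ((1 - (chi a t : ℂ)) / 2) • g (sP a) := by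
  classical
  rw [finsum_sP _ (NSet_sub _)]
  apply Finset.sum_congr rfl
  intro a _
  rw [mem_NSet]
  rcases chi_cases a t with h | h <;> rw [h] <;> norm_num

lemma finsum_diff {q : ℕ} {V : Type*} [AddCommGroup V] [Module ℂ V] (t s : Fin q → Fin 4)
    (hst : chi s t = 1) (g : Mat q → V) :
    (∑ᶠ x ∈ NSet (sP t) ∩ CSet (sP s), g x) - ∑ᶠ x ∈ NSet (sP t) ∩ NSet (sP s), g x
      = ∑ a, ((1 - (chi a t : ℂ)) / 2 * chi a s) • g (sP a) := by
  classical
  rw [finsum_sP _ (fun x h => NSet_sub _ h.1), finsum_sP _ (fun x h => NSet_sub _ h.1),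
    ← Finset.sum_sub_distrib]
  apply Finset.sum_congr rfl
  intro a _
  simp only [Set.mem_inter_iff, mem_NSet, mem_CSet]
  rcases chi_cases a t with h | h <;> rw [h]
  · norm_num
  · have h0 : a ≠ 0 := by
      rintro rfl
      rw [zero_chi] at h
      norm_num at h
    have h1 : a ≠ s := by
      rintro rfl
      rw [hst] at h
      norm_num at h
    rcases chi_cases a s with h' | h' <;> rw [h'] <;> norm_num [h0, h1]

/-! ### Algebra -/

lemma AVec_eq {q : ℕ} (σ τ : Mat q) : AVec σ (Complex.I • nprod σ τ) =
    (((Real.sqrt 2 : ℂ))⁻¹ * (Complex.I * sqrtd q)) • (σ ⊗ₖ (σ * τ) - (σ * τ) ⊗ₖ σ) := by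
  unfold AVec nprod
  simp only [Matrix.kronecker_smul, Matrix.smul_kronecker, smul_smul, ← smul_sub]

/-- contraction -/
def mulMap (q : ℕ) : BMat q →ₗ[ℂ] Mat q where
  toFun X := Matrix.of fun i l => ∑ j, X (i, j) (j, l)
  map_add' X Y := by
    ext i l
    simp [Finset.sum_add_distrib]
  map_smul' c X := by
    ext i l
    simp [Finset.mul_sum]

lemma mulMap_kron {q : ℕ} (A B : Mat q) : mulMap q (A ⊗ₖ B) = A * B := by
  ext i l
  rfl

lemma comm_chi {q : ℕ} (a b : Fin q → Fin 4) :
    sP a * sP b - sP b * sP a = (1 - (chi a b : ℂ)) • (sP a * sP b) := by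
  rw [sP_comm b a, chi_symm b a]
  module

lemma hs_kron {q : ℕ} (A B C D : Mat q) :
    hs (A ⊗ₖ B) (C ⊗ₖ D) = (Aᴴ * C).trace * (Bᴴ * D).trace := by
  unfold hs
  rw [Matrix.conjTranspose_kronecker, ← Matrix.mul_kronecker_mul, Matrix.trace_kronecker]

lemma hs_add_right {q : ℕ} (A B C : BMat q) : hs A (B + C) = hs A B + hs A C := by
  simp [hs, Matrix.mul_add]

lemma hs_sub_right {q : ℕ} (A B C : BMat q) : hs A (B - C) = hs A B - hs A C := by
  simp [hs, Matrix.mul_sub]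

lemma hs_sub_left {q : ℕ} (A B C : BMat q) : hs (A - B) C = hs A C - hs B C := by
  simp [hs, Matrix.sub_mul]

lemma hs_smul_right {q : ℕ} (c : ℂ) (A B : BMat q) : hs A (c • B) = c * hs A B := by
  simp [hs]

lemma hs_smul_left {q : ℕ} (c : ℂ) (A B : BMat q) : hs (c • A) B = star c * hs A B := by
  simp [hs]

lemma hs_sum_left {q : ℕ} {ι : Type*} (s : Finset ι) (f : ι → BMat q) (B : BMat q) :
    hs (∑ i ∈ s, f i) B = ∑ i ∈ s, hs (f i) B := by
  simp [hs, Matrix.conjTranspose_sum, Finset.sum_mul, Matrix.trace_sum]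

lemma hs_sum_right {q : ℕ} {ι : Type*} (s : Finset ι) (f : ι → BMat q) (B : BMat q) :
    hs B (∑ i ∈ s, f i) = ∑ i ∈ s, hs B (f i) := by
  simp [hs, Finset.mul_sum, Matrix.trace_sum]

/-- unnormalized adjoint vector -/
def W {q : ℕ} (ν : Mat q) : BMat q :=
  ∑ a, (sP a ⊗ₖ (sP a * ν - ν * sP a) - (sP a * ν - ν * sP a) ⊗ₖ sP a)

lemma vadjA_eq {q : ℕ} (n : Fin q → Fin 4) : ∃ c : ℂ, vadjA (sP n) = c • W (sP n) := by
  unfold vadjA W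
  rw [finsum_N]
  refine ⟨((Real.sqrt (2 * ((NSet (sP n)).ncard : ℝ)) : ℂ))⁻¹ *
    ((((Real.sqrt 2 : ℂ))⁻¹ * (Complex.I * sqrtd q)) / 2), ?_⟩
  rw [mul_smul]
  congr 1
  rw [Finset.smul_sum]
  apply Finset.sum_congr rfl
  intro a _
  rw [AVec_eq, comm_chi, Matrix.kronecker_smul, Matrix.smul_kronecker, ← smul_sub, smul_smul,
    smul_smul]
  congr 1
  ring

lemma compl_trace {q : ℕ} (A M : Mat q) :
    ∑ a, (sP a * A).trace * (sP a * M).trace = (A * M).trace := by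
  conv_rhs => rw [← sP_compl A]
  simp [Finset.sum_mul, Matrix.trace_sum]

lemma hs_W {q : ℕ} (n : Fin q → Fin 4) (A B : Mat q) :
    hs (W (sP n)) (A ⊗ₖ B) = (A * (B * sP n - sP n * B)).trace
      - ((A * sP n - sP n * A) * B).trace := by
  have h : ∀ (a : Fin q → Fin 4) (M : Mat q), ((sP a * sP n - sP n * sP a)ᴴ * M).trace
      = (sP a * (M * sP n - sP n * M)).trace := by
    intro a M
    rw [Matrix.conjTranspose_sub, Matrix.conjTranspose_mul, Matrix.conjTranspose_mul, sP_herm,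
      sP_herm, Matrix.sub_mul, Matrix.mul_sub, Matrix.trace_sub, Matrix.trace_sub,
      ← Matrix.mul_assoc, ← Matrix.mul_assoc, Matrix.trace_mul_cycle (sP a) M,
      Matrix.mul_assoc]
  unfold W
  rw [hs_sum_left]
  simp only [hs_sub_left, hs_kron, h, sP_herm]
  rw [Finset.sum_sub_distrib, compl_trace]
  congr 1
  rw [← compl_trace]

lemma hs_W_const {q : ℕ} (n t a : Fin q → Fin 4) (h : chi a t = -1) :
    hs (W (sP n)) (sP a ⊗ₖ (sP a * sP t) - (sP a * sP t) ⊗ₖ sP a)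
      = 8 * ((2 : ℂ) ^ q)⁻¹ * (sP n * sP t).trace := by
  have hc : sP t * sP a = - (sP a * sP t) := by
    rw [sP_comm t a, chi_symm, h]; simp
  have hsq := sP_sq a
  rw [hs_sub_right, hs_W, hs_W]
  generalize sP a = s at *
  generalize sP t = τ at *
  generalize sP n = ν at *
  have e1 : (s * (s * τ * ν)).trace = ((2 : ℂ) ^ q)⁻¹ * (ν * τ).trace := by
    rw [← Matrix.mul_assoc, ← Matrix.mul_assoc, hsq, Matrix.trace_mul_comm ν]; simp
  have e2 : (s * (ν * (s * τ))).trace = -(((2 : ℂ) ^ q)⁻¹ * (ν * τ).trace) := by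
    rw [Matrix.trace_mul_comm, Matrix.mul_assoc, Matrix.mul_assoc, hc, Matrix.mul_neg,
      ← Matrix.mul_assoc s, hsq]; simp
  have e3 : (s * ν * (s * τ)).trace = -(((2 : ℂ) ^ q)⁻¹ * (ν * τ).trace) := by
    rw [Matrix.mul_assoc, e2]
  have e4 : (ν * s * (s * τ)).trace = ((2 : ℂ) ^ q)⁻¹ * (ν * τ).trace := by
    rw [Matrix.mul_assoc, ← Matrix.mul_assoc s, hsq]; simp
  have e5 : (s * τ * (s * ν)).trace = -(((2 : ℂ) ^ q)⁻¹ * (ν * τ).trace) := by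
    rw [Matrix.mul_assoc, ← Matrix.mul_assoc τ, hc, Matrix.neg_mul, Matrix.mul_neg,
      Matrix.trace_neg, ← e1]
  have e6 : (s * τ * (ν * s)).trace = ((2 : ℂ) ^ q)⁻¹ * (ν * τ).trace := by
    rw [Matrix.trace_mul_comm, e4]
  have e7 : (s * τ * ν * s).trace = ((2 : ℂ) ^ q)⁻¹ * (ν * τ).trace := by
    rw [Matrix.mul_assoc, e6]
  have e8 : (ν * (s * τ) * s).trace = -(((2 : ℂ) ^ q)⁻¹ * (ν * τ).trace) := by
    rw [Matrix.trace_mul_comm, e2]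
  simp only [Matrix.mul_sub, Matrix.sub_mul, Matrix.trace_sub, e1, e2, e3, e4, e5, e6, e7, e8]
  ring

lemma eps_sum {q : ℕ} (t s : Fin q → Fin 4) (h0 : s ≠ 0) (hne : s ≠ t) :
    ∑ a : Fin q → Fin 4, (1 - (chi a t : ℂ)) / 2 * chi a s = 0 := by
  have h1 := chi_orth h0
  have h2 := chi_orth hne
  simp only [chi_zero, mul_one] at h1
  have h1' : ∑ a : Fin q → Fin 4, (chi a s : ℂ) = 0 := by exact_mod_cast h1
  have h2' : ∑ a : Fin q → Fin 4, (chi a s : ℂ) * chi a t = 0 := by exact_mod_cast h2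
  have : ∀ a : Fin q → Fin 4, (1 - (chi a t : ℂ)) / 2 * chi a s
      = (1/2) * (chi a s : ℂ) - (1/2) * ((chi a s : ℂ) * chi a t) := fun a => by ring
  simp only [this]
  rw [Finset.sum_sub_distrib, ← Finset.mul_sum, ← Finset.mul_sum, h1', h2']
  simp

/-- twisted contraction -/
def TMap {q : ℕ} (s : Mat q) (X : BMat q) : Mat q :=
  mulMap q ((s ⊗ₖ (1 : Mat q)) * X * (s ⊗ₖ (1 : Mat q)))

lemma TMap_kron {q : ℕ} (s A B : Mat q) : TMap s (A ⊗ₖ B) = s * A * s * B := by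
  unfold TMap
  rw [← Matrix.mul_kronecker_mul, ← Matrix.mul_kronecker_mul, mulMap_kron]
  simp

lemma TMap_add {q : ℕ} (s : Mat q) (X Y : BMat q) : TMap s (X + Y) = TMap s X + TMap s Y := by
  simp [TMap, Matrix.mul_add, Matrix.add_mul]

lemma TMap_sub {q : ℕ} (s : Mat q) (X Y : BMat q) : TMap s (X - Y) = TMap s X - TMap s Y := by
  simp [TMap, Matrix.mul_sub, Matrix.sub_mul]

lemma TMap_smul {q : ℕ} (s : Mat q) (c : ℂ) (X : BMat q) : TMap s (c • X) = c • TMap s X := by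
  simp [TMap]

/-- antisymmetrized commutator -/
def BMap {q : ℕ} (s T : Mat q) : BMat q :=
  s ⊗ₖ (s * T - T * s) - (s * T - T * s) ⊗ₖ s

lemma BMap_add {q : ℕ} (s X Y : Mat q) : BMap s (X + Y) = BMap s X + BMap s Y := by
  have : s * (X + Y) - (X + Y) * s = (s * X - X * s) + (s * Y - Y * s) := by noncomm_ring
  simp only [BMap, this, Matrix.kronecker_add, Matrix.add_kronecker]
  abel

lemma BMap_smul {q : ℕ} (s : Mat q) (c : ℂ) (X : Mat q) : BMap s (c • X) = c • BMap s X := by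
  simp only [BMap, Matrix.mul_smul, Matrix.smul_mul, ← smul_sub, Matrix.kronecker_smul,
    Matrix.smul_kronecker]

/-- the explicit `Θ` -/
def ThetaMap (q : ℕ) : BMat q →ₗ[ℂ] BMat q where
  toFun X := (Complex.I * (2 ^ q * 2 ^ q) / 4) • ∑ a, BMap (sP a) (TMap (sP a) X)
  map_add' X Y := by
    simp only [TMap_add, BMap_add, Finset.sum_add_distrib, smul_add]
  map_smul' c X := by
    simp only [TMap_smul, BMap_smul, ← Finset.smul_sum, RingHom.id_apply]
    rw [smul_comm]

lemma conj_sP {q : ℕ} (a s : Fin q → Fin 4) :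
    sP a * sP s * sP a = ((chi a s : ℂ) * ((2 : ℂ) ^ q)⁻¹) • sP s := by
  rw [sP_comm a s, Matrix.smul_mul, Matrix.mul_assoc, sP_sq, Matrix.mul_smul, smul_smul,
    Matrix.mul_one]

lemma conj_sP2 {q : ℕ} (a s t : Fin q → Fin 4) :
    sP a * (sP s * sP t) * sP a
      = ((chi a s : ℂ) * chi a t * ((2 : ℂ) ^ q)⁻¹) • (sP s * sP t) := by
  rw [← Matrix.mul_assoc, sP_comm a s, Matrix.smul_mul, Matrix.smul_mul, Matrix.mul_assoc (sP s),
    Matrix.mul_assoc (sP s), conj_sP, Matrix.mul_smul, smul_smul]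
  congr 1
  ring

lemma TMap_gen {q : ℕ} (a s t : Fin q → Fin 4) (hst : chi s t = 1) :
    TMap (sP a) (AVec (sP s) (nprod (sP s) (sP t))) =
      (((Real.sqrt 2 : ℂ))⁻¹ * sqrtd q * ((2 : ℂ) ^ q)⁻¹ * ((2 : ℂ) ^ q)⁻¹ *
        (chi a s * (1 - chi a t))) • sP t := by
  unfold AVec nprod
  simp only [Matrix.kronecker_smul, Matrix.smul_kronecker, ← smul_sub, TMap_smul, TMap_sub,
    TMap_kron]
  rw [conj_sP2, conj_sP, Matrix.smul_mul, Matrix.smul_mul, ← Matrix.mul_assoc (sP s) (sP s), sP_sq,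
    (comm_iff s t).2 hst, Matrix.mul_assoc (sP t), sP_sq]
  simp only [Matrix.smul_mul, Matrix.mul_smul, Matrix.one_mul, Matrix.mul_one]
  module

lemma chi_sq {q : ℕ} (a b : Fin q → Fin 4) : (chi a b : ℂ) * chi a b = 1 := by
  rcases chi_cases a b with h | h <;> rw [h] <;> norm_num

lemma ThetaMap_prop (q : ℕ) : ThetaProp q (ThetaMap q) := by
  intro τ hτ σ hσ
  obtain ⟨t, ht, rfl⟩ := (mem_sigmaSet τ).1 hτ
  obtain ⟨s, hs, rfl⟩ := (mem_sigmaSet σ).1 hσ.1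
  obtain ⟨-, hne, hst⟩ := (mem_CSet s t).1 hσ
  rw [finsum_diff t s hst (fun x => AVec x (Complex.I • nprod x (sP t)))]
  simp only [ThetaMap, LinearMap.coe_mk, AddHom.coe_mk]
  rw [Finset.smul_sum]
  apply Finset.sum_congr rfl
  intro a _
  rw [TMap_gen a s t hst, BMap_smul, AVec_eq]
  unfold BMap
  rw [comm_chi, Matrix.kronecker_smul, Matrix.smul_kronecker, ← smul_sub]
  simp only [smul_smul]
  congr 1
  have h2 : ((2 : ℂ) ^ q) ≠ 0 := pow_ne_zero _ two_ne_zero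
  have h3 := chi_sq a t
  field_simp
  linear_combination 2 * sqrtd q * (chi a s : ℂ) * h3

lemma orth {q : ℕ} (Θ : BMat q →ₗ[ℂ] BMat q) (hΘ : ThetaProp q Θ) (ν : Mat q)
    (hν : ν ∈ sigmaSet q) (x : BMat q) (hx : x ∈ VAcom' q) : hs (vadjA ν) (Θ x) = 0 := by
  obtain ⟨n, hn, rfl⟩ := (mem_sigmaSet ν).1 hν
  obtain ⟨c, hc⟩ := vadjA_eq n
  rw [hc, hs_smul_left]
  apply mul_eq_zero_of_right
  unfold VAcom' at hx
  induction hx using Submodule.span_induction with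
  | zero => simp [hs]
  | add x y _ _ hx hy => rw [map_add, hs_add_right, hx, hy, add_zero]
  | smul k x _ hx => rw [map_smul, hs_smul_right, hx, mul_zero]
  | mem x hx =>
    obtain ⟨τ, hτ, σ, hσ, rfl⟩ := hx
    rw [hΘ τ hτ σ hσ]
    obtain ⟨t, ht, rfl⟩ := (mem_sigmaSet τ).1 hτ
    obtain ⟨s, hs0, rfl⟩ := (mem_sigmaSet σ).1 hσ.1
    obtain ⟨-, hne, hst⟩ := (mem_CSet s t).1 hσ
    rw [finsum_diff t s hst (fun x => AVec x (Complex.I • nprod x (sP t))), hs_sum_right]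
    set K := 8 * ((2 : ℂ) ^ q)⁻¹ * (sP n * sP t).trace with hK
    have : ∀ a : Fin q → Fin 4,
        hs (W (sP n)) (((1 - (chi a t : ℂ)) / 2 * chi a s) •
          AVec (sP a) (Complex.I • nprod (sP a) (sP t)))
        = ((1 - (chi a t : ℂ)) / 2 * chi a s) *
          ((((Real.sqrt 2 : ℂ))⁻¹ * (Complex.I * sqrtd q)) * K) := by
      intro a
      rw [hs_smul_right]
      rcases chi_cases a t with h | h
      · rw [h]; simp
      · rw [AVec_eq, hs_smul_right, hs_W_const n t a h]
    simp only [this]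
    rw [← Finset.sum_mul, eps_sum t s hs0 hne, zero_mul]

/-- the map `Θ` on `V_[A]` is well defined (a linear map with the
defining property exists) and its image is orthogonal to `V_{adj}`. -/
theorem statement8 (q : ℕ) (hq : 2 ≤ q) :
    (∃ Θ : BMat q →ₗ[ℂ] BMat q, ThetaProp q Θ) ∧
    ∀ Θ : BMat q →ₗ[ℂ] BMat q, ThetaProp q Θ →
      ∀ ν ∈ sigmaSet q, ∀ x ∈ VAcom' q, hs (vadjA ν) (Θ x) = 0 := by
  exact ⟨⟨ThetaMap q, ThetaMap_prop q⟩, fun Θ hΘ ν hν x hx => orth Θ hΘ ν hν x hx⟩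

end CliffordPaper
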